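/- arXiv:1307.1415 — 4 statements merged into one kernel-verified Lean document; each statement's English description precedes it below -/
import Mathlib

section
/- Let X and Y be pre-ordered Banach spaces with closed cones and α, β > 0. If X is approximately α-absolutely conormal and Y is β-absolutely normal, then B(X,Y) is αβ-absolutely normal: for all T, S ∈ B(X,Y), ±T ≤ S implies ‖T‖ ≤ αβ‖S‖. -/
/-!
If `±x ≤ a` and `±T ≤ S`, then `±T x ≤ S a`: for instance `S a - T x` is the midpoint of
`(S - T) (a + x)` and `(S + T) (a - x)`, both positive. Normality of `Y` then gives
`‖T x‖ ≤ β ‖S‖ ‖a‖`, and conormality of `X` lets `‖a‖` come arbitrarily close to `α ‖x‖`.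
-/

open Filter Topology

section Definitions

variable {E : Type*} [SeminormedAddCommGroup E]

/-- `α`-absolute normality: `±x ≤ y` implies `‖x‖ ≤ α * ‖y‖`, where `u ≤ v` stands for
`v - u ∈ C` and the cone `C` is encoded as a plain set. -/
def IsAbsolutelyNormal (C : Set E) (α : ℝ) : Prop :=
  ∀ x y : E, y - x ∈ C → y + x ∈ C → ‖x‖ ≤ α * ‖y‖

/-- Approximate `α`-absolute conormality: every `x` satisfies `±x ≤ a` for some positive `a` whose
norm exceeds `α * ‖x‖` by less than any prescribed `ε > 0`. Here too, `u ≤ v` stands for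
`v - u ∈ C`. -/
def IsApproxAbsolutelyConormal (C : Set E) (α : ℝ) : Prop :=
  ∀ x : E, ∀ ε : ℝ, 0 < ε → ∃ a, a ∈ C ∧ a - x ∈ C ∧ a + x ∈ C ∧ ‖a‖ < α * ‖x‖ + ε

end Definitions

section Domination

variable {F X Y : Type*} [AddCommGroup X] [FunLike F X Y] {Cx : Set X} {Cy : Set Y}
  {T S : F} {x a : X}

theorem apply_sub_apply_mem_of_convex [AddCommGroup Y] [Module ℝ Y] [AddMonoidHomClass F X Y]
    (hCy : Convex ℝ Cy) (hsub : ∀ z ∈ Cx, S z - T z ∈ Cy) (hadd : ∀ z ∈ Cx, S z + T z ∈ Cy)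
    (hax_sub : a - x ∈ Cx) (hax_add : a + x ∈ Cx) : S a - T x ∈ Cy := by
  have hmid : midpoint ℝ (S (a + x) - T (a + x)) (S (a - x) + T (a - x)) = S a - T x := by
    rw [midpoint_eq_smul_add, map_add, map_add, map_sub, map_sub, invOf_eq_inv]
    module
  exact hmid ▸ hCy.midpoint_mem (hsub _ hax_add) (hadd _ hax_sub)

theorem IsAbsolutelyNormal.norm_apply_le_mul_norm_apply [SeminormedAddCommGroup Y] [Module ℝ Y]
    [AddMonoidHomClass F X Y] {β : ℝ} (hY : IsAbsolutelyNormal Cy β) (hCy : Convex ℝ Cy)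
    (hsub : ∀ z ∈ Cx, S z - T z ∈ Cy) (hadd : ∀ z ∈ Cx, S z + T z ∈ Cy)
    (hax_sub : a - x ∈ Cx) (hax_add : a + x ∈ Cx) : ‖T x‖ ≤ β * ‖S a‖ := by
  have hle : S a - T x ∈ Cy := apply_sub_apply_mem_of_convex hCy hsub hadd hax_sub hax_add
  have hneg_le : S a - T (-x) ∈ Cy :=
    apply_sub_apply_mem_of_convex hCy hsub hadd (by rwa [sub_neg_eq_add])
      (by rwa [← sub_eq_add_neg])
  rw [map_neg, sub_neg_eq_add] at hneg_le
  exact hY _ _ hle hneg_le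

end Domination

section Operators

variable {X Y : Type*} [SeminormedAddCommGroup X] [NormedSpace ℝ X]
  [SeminormedAddCommGroup Y] [NormedSpace ℝ Y]

/-- The cone `B(X, Y)₊` of positive bounded operators, those mapping the cone `Cx` of `X` into the
cone `Cy` of `Y`. -/
def positiveOperators (Cx : Set X) (Cy : Set Y) : Set (X →L[ℝ] Y) :=
  {T | ∀ x ∈ Cx, T x ∈ Cy}

theorem stmt_5_general {Cx : Set X} {Cy : Set Y} {α β : ℝ} (hCy : Convex ℝ Cy)
    (hα : 0 ≤ α) (hβ : 0 ≤ β) (hX : IsApproxAbsolutelyConormal Cx α)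
    (hY : IsAbsolutelyNormal Cy β) :
    IsAbsolutelyNormal (positiveOperators Cx Cy) (α * β) := by
  intro T S hsub hadd
  refine T.opNorm_le_bound (by positivity) fun x => ?_
  have hbound : ∀ ε > 0, ‖T x‖ ≤ β * (‖S‖ * (α * ‖x‖ + ε)) := by
    intro ε hε
    obtain ⟨a, -, hax_sub, hax_add, ha⟩ := hX x ε hε
    calc ‖T x‖ ≤ β * ‖S a‖ := hY.norm_apply_le_mul_norm_apply hCy hsub hadd hax_sub hax_add
      _ ≤ β * (‖S‖ * (α * ‖x‖ + ε)) := by gcongr; exact S.le_opNorm_of_le ha.le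
  have hlim : Tendsto (fun ε => β * (‖S‖ * (α * ‖x‖ + ε))) (𝓝[>] 0) (𝓝 (α * β * ‖S‖ * ‖x‖)) :=
    (Continuous.tendsto' (by fun_prop) _ _ (by ring)).mono_left nhdsWithin_le_nhds
  exact ge_of_tendsto hlim (eventually_mem_nhdsWithin.mono hbound)

end Operators

/-- If `X` is approximately `α`-absolutely conormal and `Y` is `β`-absolutely
normal, then `B(X,Y)` is `αβ`-absolutely normal. -/
theorem stmt_5
    {X : Type*} [NormedAddCommGroup X] [NormedSpace ℝ X] [CompleteSpace X]
    {Y : Type*} [NormedAddCommGroup Y] [NormedSpace ℝ Y] [CompleteSpace Y]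
    (Cx : Set X) (hCx_closed : IsClosed Cx)
    (hCx_add : ∀ a ∈ Cx, ∀ b ∈ Cx, a + b ∈ Cx)
    (hCx_smul : ∀ r : ℝ, 0 ≤ r → ∀ a ∈ Cx, r • a ∈ Cx)
    (Cy : Set Y) (hCy_closed : IsClosed Cy)
    (hCy_add : ∀ a ∈ Cy, ∀ b ∈ Cy, a + b ∈ Cy)
    (hCy_smul : ∀ r : ℝ, 0 ≤ r → ∀ a ∈ Cy, r • a ∈ Cy)
    (α β : ℝ) (hα : 0 < α) (hβ : 0 < β)
    (hXconormal : ∀ x : X, ∀ ε : ℝ, 0 < ε →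
      ∃ a, a ∈ Cx ∧ a - x ∈ Cx ∧ a + x ∈ Cx ∧ ‖a‖ < α * ‖x‖ + ε)
    (hYnormal : ∀ x y : Y, y - x ∈ Cy → y + x ∈ Cy → ‖x‖ ≤ β * ‖y‖) :
    ∀ T S : X →L[ℝ] Y, (∀ x ∈ Cx, (S - T) x ∈ Cy) → (∀ x ∈ Cx, (S + T) x ∈ Cy) →
      ‖T‖ ≤ α * β * ‖S‖ := by
  have hCy : Convex ℝ Cy := fun a ha b hb s t hs ht _ =>
    hCy_add _ (hCy_smul s hs a ha) _ (hCy_smul t ht b hb)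
  exact stmt_5_general hCy hα.le hβ.le hXconormal hYnormal
end

section
/- Every monotone υ-quasi-lattice is a μ-quasi-lattice, and its υ- and μ-quasi-lattice structures coincide: if X is a monotone υ-quasi-lattice, then for every x, y ∈ X the υ-quasi-supremum x∨̃y is a minimal upper bound of {x,y}, and it is the unique element of μ({x,y}) minimizing σ_{x,y} on μ({x,y}). -/
/-!
If `q` minimizes `σ_{x,y}` among the upper bounds of `{x, y}` and `w ≤ q` is another upper bound,
then `0 ≤ w - x ≤ q - x` and `0 ≤ w - y ≤ q - y`, so monotonicity of the norm makes `w` a minimizer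
as well, and uniqueness gives `w = q`. Hence `q` is a minimal upper bound, and a unique minimizer
over a set remains one over every subset containing it.
-/

section UniqueMinimizer

variable {α β : Type*} [Preorder β] {f : α → β} {s t : Set α} {a : α}

/-- The point `a` is the unique minimizer of `f` on `s`. -/
def IsUniqueMinOn (f : α → β) (s : Set α) (a : α) : Prop :=
  (a ∈ s ∧ IsMinOn f s a) ∧ ∀ b, b ∈ s ∧ IsMinOn f s b → b = a

/-- The point `a` of `s` is minimal for the relation `r`. As `r` need not be antisymmetric,
this asks for `b = a` where Mathlib's `Minimal` asks for `r a b`. -/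
def IsMinimalIn (r : α → α → Prop) (s : Set α) (a : α) : Prop :=
  a ∈ s ∧ ∀ b ∈ s, r b a → b = a

theorem IsUniqueMinOn.mono_set (h : IsUniqueMinOn f s a) (hts : t ⊆ s) (ha : a ∈ t) :
    IsUniqueMinOn f t a := by
  obtain ⟨⟨-, hmin⟩, huniq⟩ := h
  refine ⟨⟨ha, hmin.on_subset hts⟩, fun b ⟨hb, hbmin⟩ => huniq b ⟨hts hb, fun c hc => ?_⟩⟩
  calc
    f b ≤ f a := hbmin ha
    _ ≤ f c := hmin hc

theorem IsUniqueMinOn.isMinimalIn {r : α → α → Prop} (h : IsUniqueMinOn f s a)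
    (hf : ∀ b ∈ s, r b a → f b ≤ f a) : IsMinimalIn r s a := by
  obtain ⟨⟨ha, hmin⟩, huniq⟩ := h
  exact ⟨ha, fun b hb hba => huniq b ⟨hb, fun c hc => (hf b hb hba).trans (hmin hc)⟩⟩

end UniqueMinimizer

section Cone

variable {X : Type*} [AddGroup X] {C : Set X} {x y w z : X}

/-- The relation `x ≤ y` induced by the positive cone `C`. -/
def ConeLE (C : Set X) (x y : X) : Prop :=
  y - x ∈ C

/-- The set `υ({x, y})` of upper bounds of `{x, y}` for the relation induced by `C`. -/
def pairUpperBounds (C : Set X) (x y : X) : Set X :=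
  {z | ConeLE C x z ∧ ConeLE C y z}

/-- The set `μ({x, y})` of minimal upper bounds of `{x, y}` for the relation induced by `C`. -/
def pairMinimalUpperBounds (C : Set X) (x y : X) : Set X :=
  {z | IsMinimalIn (ConeLE C) (pairUpperBounds C x y) z}

theorem pairMinimalUpperBounds_subset :
    pairMinimalUpperBounds C x y ⊆ pairUpperBounds C x y :=
  fun _ hz => hz.1

variable [Norm X]

/-- The function `σ_{x,y}` sending `z` to the sum of its distances to `x` and `y`. -/
def normSubSum (x y z : X) : ℝ :=
  ‖z - x‖ + ‖z - y‖

/-- Monotonicity of the norm for the relation induced by `C`: `0 ≤ x ≤ y` implies `‖x‖ ≤ ‖y‖`. -/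
def NormMonotone (C : Set X) : Prop :=
  ∀ x y : X, x ∈ C → y - x ∈ C → ‖x‖ ≤ ‖y‖

theorem NormMonotone.norm_sub_le_norm_sub (hC : NormMonotone C) (hxw : ConeLE C x w)
    (hwz : ConeLE C w z) : ‖w - x‖ ≤ ‖z - x‖ :=
  hC _ _ hxw ((sub_sub_sub_cancel_right z w x).symm ▸ hwz)

theorem NormMonotone.normSubSum_le (hC : NormMonotone C) (hw : w ∈ pairUpperBounds C x y)
    (hwz : ConeLE C w z) : normSubSum x y w ≤ normSubSum x y z :=
  add_le_add (hC.norm_sub_le_norm_sub hw.1 hwz) (hC.norm_sub_le_norm_sub hw.2 hwz)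

theorem stmt_14_general (hC : NormMonotone C)
    (hz : IsUniqueMinOn (normSubSum x y) (pairUpperBounds C x y) z) :
    z ∈ pairMinimalUpperBounds C x y ∧
      IsUniqueMinOn (normSubSum x y) (pairMinimalUpperBounds C x y) z := by
  have hminimal : z ∈ pairMinimalUpperBounds C x y :=
    hz.isMinimalIn fun _ hw hwz => hC.normSubSum_le hw hwz
  exact ⟨hminimal, hz.mono_set pairMinimalUpperBounds_subset hminimal⟩

end Cone

/-- Every monotone `υ`-quasi-lattice is a `μ`-quasi-lattice with coinciding
structures: the `υ`-quasi-supremum `qsup x y` is a minimal upper bound of `{x,y}`, and it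
is the unique minimal upper bound minimizing `σ_{x,y}` over all minimal upper bounds. -/
theorem stmt_14
    {X : Type*} [NormedAddCommGroup X] [NormedSpace ℝ X] [CompleteSpace X]
    (C : Set X) (hC_closed : IsClosed C)
    (hC_add : ∀ a ∈ C, ∀ b ∈ C, a + b ∈ C)
    (hC_smul : ∀ r : ℝ, 0 ≤ r → ∀ a ∈ C, r • a ∈ C)
    (hmono : ∀ x y : X, x ∈ C → y - x ∈ C → ‖x‖ ≤ ‖y‖)
    (qsup : X → X → X)
    (hqsup : ∀ x y : X,
      ((qsup x y - x ∈ C ∧ qsup x y - y ∈ C) ∧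
        ∀ w : X, (w - x ∈ C ∧ w - y ∈ C) →
          ‖qsup x y - x‖ + ‖qsup x y - y‖ ≤ ‖w - x‖ + ‖w - y‖) ∧
      ∀ z : X, ((z - x ∈ C ∧ z - y ∈ C) ∧
          ∀ w : X, (w - x ∈ C ∧ w - y ∈ C) →
            ‖z - x‖ + ‖z - y‖ ≤ ‖w - x‖ + ‖w - y‖) → z = qsup x y) :
    ∀ x y : X,
      -- qsup x y is a minimal upper bound of {x,y}
      ((qsup x y - x ∈ C ∧ qsup x y - y ∈ C) ∧
        ∀ w : X, (w - x ∈ C ∧ w - y ∈ C) → qsup x y - w ∈ C → w = qsup x y) ∧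
      -- it minimizes σ_{x,y} on the minimal upper bounds
      (∀ w : X, ((w - x ∈ C ∧ w - y ∈ C) ∧
          ∀ u : X, (u - x ∈ C ∧ u - y ∈ C) → w - u ∈ C → u = w) →
        ‖qsup x y - x‖ + ‖qsup x y - y‖ ≤ ‖w - x‖ + ‖w - y‖) ∧
      -- and it is the unique such minimizer
      (∀ z : X, (((z - x ∈ C ∧ z - y ∈ C) ∧
            ∀ u : X, (u - x ∈ C ∧ u - y ∈ C) → z - u ∈ C → u = z) ∧
          ∀ w : X, ((w - x ∈ C ∧ w - y ∈ C) ∧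
              ∀ u : X, (u - x ∈ C ∧ u - y ∈ C) → w - u ∈ C → u = w) →
            ‖z - x‖ + ‖z - y‖ ≤ ‖w - x‖ + ‖w - y‖) →
        z = qsup x y) := by
  intro x y
  obtain ⟨hminimal, ⟨-, hmin⟩, huniq⟩ := stmt_14_general hmono (hqsup x y)
  exact ⟨hminimal, hmin, huniq⟩
end

section
/- Let α > 0 and let X be an α-normal, smooth, reflexive pre-ordered Banach space with a closed cone such that X₊ − X₊ is dense in X. Then the dual X' (ordered by the dual cone) is an υ-quasi-lattice. If, in addition, X is approximately 1-conormal, then X' is a μ-quasi-lattice, and its υ- and μ-quasi-lattice structures coincide. -/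
/-!
The dual cone is weak-* closed; it is generating because `C` is normal, and salient because
`C - C` is dense. So the upper bounds of `f` and `g` form a nonempty weak-* closed set, on which the
coercive weak-* lower semicontinuous function `h ↦ ‖h - f‖ + ‖h - g‖` attains its minimum by
Banach–Alaoglu.

Smoothness and reflexivity make the dual norm strictly convex. Comparing two minimizers `h₁`, `h₂`
with their midpoint then shows that `h₁ - f`, `h₂ - f` lie on a common ray, and so do `h₁ - g`,
`h₂ - g`. If `‖h₂ - f‖ ≤ ‖h₁ - f‖`, then `‖h₁ - g‖ ≤ ‖h₂ - g‖` since the sums agree; as the four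
vectors are positive, the first ray gives `h₂ ≤ h₁`, the second `h₁ ≤ h₂`, whence `h₁ = h₂`.

If `X` is approximately `1`-conormal, the dual norm is monotone on the dual cone, so an upper bound
below the minimizer is again a minimizer: the minimizer is a minimal upper bound.
-/

open Set

section QuasiSup

variable {E : Type*} [NormedAddCommGroup E]

/-- `h` minimizes `σ_{f,g} h = ‖h - f‖ + ‖h - g‖` over `S`. For `S = coneUpperBounds K f g` and
`S = minimalConeUpperBounds K f g`, the unique such `h`, if there is one, is the `υ`- and the
`μ`-quasi-supremum of `f` and `g`, respectively. Uniqueness is not part of the definition. -/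
def IsQuasiSup (S : Set E) (f g h : E) : Prop :=
  h ∈ S ∧ ∀ k ∈ S, ‖h - f‖ + ‖h - g‖ ≤ ‖k - f‖ + ‖k - g‖

variable {S : Set E} {f g h h₁ h₂ : E}

theorem IsQuasiSup.norm_sub_add_norm_sub_eq (hh₁ : IsQuasiSup S f g h₁)
    (hh₂ : IsQuasiSup S f g h₂) : ‖h₁ - f‖ + ‖h₁ - g‖ = ‖h₂ - f‖ + ‖h₂ - g‖ :=
  (hh₁.2 h₂ hh₂.1).antisymm (hh₂.2 h₁ hh₁.1)

variable [NormedSpace ℝ E]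

/-- The set `υ({f, g})` of upper bounds of `f` and `g` in the preorder with positive cone `K`. -/
def coneUpperBounds (K : PointedCone ℝ E) (f g : E) : Set E :=
  {h | h - f ∈ K ∧ h - g ∈ K}

/-- The set `μ({f, g})` of minimal upper bounds of `f` and `g` in the preorder with positive cone
`K`. Minimality of `h` asks for `k = h`, not only for `h ≤ k`, when `k ≤ h` is an upper bound. -/
def minimalConeUpperBounds (K : PointedCone ℝ E) (f g : E) : Set E :=
  {h | h ∈ coneUpperBounds K f g ∧ ∀ k ∈ coneUpperBounds K f g, h - k ∈ K → k = h}

/-- `α`-normality of the preorder with positive cone `K`: `0 ≤ x ≤ y` implies `‖x‖ ≤ α * ‖y‖`. -/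
def IsNormalCone (α : ℝ) (K : PointedCone ℝ E) : Prop :=
  ∀ x y : E, x ∈ K → y - x ∈ K → ‖x‖ ≤ α * ‖y‖

/-- Approximate `α`-conormality of the preorder with positive cone `K`: up to an arbitrarily small
error, every `x` lies below some `a ≥ 0` with `‖a‖ ≤ α * ‖x‖`. -/
def IsApproxConormalCone (α : ℝ) (K : PointedCone ℝ E) : Prop :=
  ∀ x : E, ∀ ε : ℝ, 0 < ε → ∃ a ∈ K, a - x ∈ K ∧ ‖a‖ < α * ‖x‖ + ε

variable {K : PointedCone ℝ E}

theorem convex_coneUpperBounds (K : PointedCone ℝ E) (f g : E) :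
    Convex ℝ (coneUpperBounds K f g) := by
  have convex_above (u : E) : Convex ℝ {h | h - u ∈ K} := by
    simpa only [sub_eq_add_neg] using! K.convex.translate_preimage_left (-u)
  exact (convex_above f).inter (convex_above g)

theorem sub_mem_of_sameRay {u v : E} (huv : SameRay ℝ u v) (hu : u ∈ K) (hnorm : ‖v‖ ≤ ‖u‖) :
    u - v ∈ K := by
  rcases eq_or_ne u 0 with rfl | hu₀
  · simp_all
  obtain ⟨r, hr, rfl⟩ := huv.exists_nonneg_left hu₀
  have hr₁ : r ≤ 1 := by
    rw [norm_smul, Real.norm_of_nonneg hr] at hnorm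
    exact (mul_le_iff_le_one_left (norm_pos_iff.2 hu₀)).1 hnorm
  have hsub : u - r • u = (1 - r) • u := by module
  exact hsub ▸ K.smul_mem (sub_nonneg.2 hr₁) hu

theorem IsQuasiSup.sameRay_sub [StrictConvexSpace ℝ E] (hS : Convex ℝ S)
    (hh₁ : IsQuasiSup S f g h₁) (hh₂ : IsQuasiSup S f g h₂) :
    SameRay ℝ (h₁ - f) (h₂ - f) ∧ SameRay ℝ (h₁ - g) (h₂ - g) := by
  have norm_midpoint_sub (u : E) :
      ‖midpoint ℝ h₁ h₂ - u‖ = ‖(h₁ - u) + (h₂ - u)‖ / 2 := by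
    have : midpoint ℝ h₁ h₂ - u = (2⁻¹ : ℝ) • ((h₁ - u) + (h₂ - u)) := by
      rw [midpoint_eq_smul_add, invOf_eq_inv]
      module
    rw [this, norm_smul, Real.norm_of_nonneg (by positivity), inv_mul_eq_div]
  have hmid := hh₁.2 _ (hS.midpoint_mem hh₁.1 hh₂.1)
  rw [norm_midpoint_sub, norm_midpoint_sub] at hmid
  have hsum := hh₁.norm_sub_add_norm_sub_eq hh₂
  have hf := norm_add_le (h₁ - f) (h₂ - f)
  have hg := norm_add_le (h₁ - g) (h₂ - g)
  exact ⟨sameRay_iff_norm_add.2 (by linarith), sameRay_iff_norm_add.2 (by linarith)⟩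

theorem IsQuasiSup.eq_of_salient [StrictConvexSpace ℝ E] (hK : (K : ConvexCone ℝ E).Salient)
    (hh₁ : IsQuasiSup (coneUpperBounds K f g) f g h₁)
    (hh₂ : IsQuasiSup (coneUpperBounds K f g) f g h₂) : h₁ = h₂ := by
  wlog hle : ‖h₂ - f‖ ≤ ‖h₁ - f‖ generalizing h₁ h₂
  · exact (this hh₂ hh₁ (le_of_not_ge hle)).symm
  have hle' : ‖h₁ - g‖ ≤ ‖h₂ - g‖ := by linarith [hh₁.norm_sub_add_norm_sub_eq hh₂]
  obtain ⟨hrayf, hrayg⟩ := hh₁.sameRay_sub (convex_coneUpperBounds K f g) hh₂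
  have h₂_le_h₁ : h₁ - h₂ ∈ K := by
    simpa only [sub_sub_sub_cancel_right] using sub_mem_of_sameRay hrayf hh₁.1.1 hle
  have h₁_le_h₂ : h₂ - h₁ ∈ K := by
    simpa only [sub_sub_sub_cancel_right] using sub_mem_of_sameRay hrayg.symm hh₂.1.2 hle'
  by_contra hne
  exact hK _ h₂_le_h₁ (sub_ne_zero.2 hne) (by simpa using h₁_le_h₂)

theorem IsQuasiSup.of_sub_mem (hK : IsNormalCone 1 K) {k : E}
    (hh : IsQuasiSup (coneUpperBounds K f g) f g h) (hk : k ∈ coneUpperBounds K f g)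
    (hkh : h - k ∈ K) : IsQuasiSup (coneUpperBounds K f g) f g k := by
  have norm_sub_le {u : E} (hu : k - u ∈ K) : ‖k - u‖ ≤ ‖h - u‖ := by
    simpa using hK (k - u) (h - u) hu (by simpa using hkh)
  exact ⟨hk, fun l hl ↦ (add_le_add (norm_sub_le hk.1) (norm_sub_le hk.2)).trans (hh.2 l hl)⟩

theorem isQuasiSup_coneUpperBounds_iff_minimal (hK : IsNormalCone 1 K)
    (hex : ∃! k, IsQuasiSup (coneUpperBounds K f g) f g k) :
    IsQuasiSup (coneUpperBounds K f g) f g h ↔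
      IsQuasiSup (minimalConeUpperBounds K f g) f g h := by
  have minimal {k : E} (hk : IsQuasiSup (coneUpperBounds K f g) f g k) :
      k ∈ minimalConeUpperBounds K f g :=
    ⟨hk.1, fun l hl hlk ↦ hex.unique (hk.of_sub_mem hK hl hlk) hk⟩
  refine ⟨fun hh ↦ ⟨minimal hh, fun k hk ↦ hh.2 k hk.1⟩, fun hh ↦ ⟨hh.1.1, fun k hk ↦ ?_⟩⟩
  obtain ⟨l, hl, -⟩ := hex
  exact (hh.2 l (minimal hl)).trans (hl.2 k hk)

end QuasiSup

section WeakDual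

variable {𝕜 X : Type*} [NontriviallyNormedField 𝕜] [NormedAddCommGroup X] [NormedSpace 𝕜 X]

theorem lowerSemicontinuous_norm_toStrongDual_sub (u : StrongDual 𝕜 X) :
    LowerSemicontinuous fun w : WeakDual 𝕜 X ↦ ‖WeakDual.toStrongDual w - u‖ := by
  refine lowerSemicontinuous_iff_isClosed_preimage.2 fun r ↦ ?_
  convert WeakDual.isClosed_closedBall u r using 1
  ext w
  simp [dist_eq_norm]

theorem exists_isQuasiSup_of_isClosed [ProperSpace 𝕜] {S : Set (StrongDual 𝕜 X)}
    (hne : S.Nonempty) (hS : IsClosed (WeakDual.toStrongDual ⁻¹' S)) (f g : StrongDual 𝕜 X) :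
    ∃ h, IsQuasiSup S f g h := by
  obtain ⟨h₀, hh₀⟩ := hne
  let r := ‖h₀ - f‖ + ‖h₀ - g‖
  have mem_ball {k : StrongDual 𝕜 X} (hk : ‖k - f‖ + ‖k - g‖ ≤ r) :
      k ∈ Metric.closedBall f r :=
    mem_closedBall_iff_norm.2 (by linarith [norm_nonneg (k - g)])
  have hcompact : IsCompact (WeakDual.toStrongDual ⁻¹' (Metric.closedBall f r ∩ S)) :=
    (WeakDual.isCompact_closedBall f r).inter_right hS
  have hne_ball : (WeakDual.toStrongDual ⁻¹' (Metric.closedBall f r ∩ S)).Nonempty :=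
    ⟨StrongDual.toWeakDual h₀, mem_ball le_rfl, hh₀⟩
  have hlsc := (lowerSemicontinuous_norm_toStrongDual_sub f).add
    (lowerSemicontinuous_norm_toStrongDual_sub g)
  obtain ⟨h, hh, hmin⟩ := (hlsc.lowerSemicontinuousOn _).exists_isMinOn hne_ball hcompact
  have hmin_ball (k : StrongDual 𝕜 X) (hk : k ∈ S) (hkr : ‖k - f‖ + ‖k - g‖ ≤ r) :=
    isMinOn_iff.1 hmin (StrongDual.toWeakDual k) ⟨mem_ball hkr, hk⟩
  refine ⟨WeakDual.toStrongDual h, hh.2, fun k hk ↦ ?_⟩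
  rcases le_total (‖k - f‖ + ‖k - g‖) r with hkr | hkr
  · exact hmin_ball k hk hkr
  · exact (hmin_ball h₀ hh₀ le_rfl).trans hkr

end WeakDual

section Reflexive

theorem exists_norm_eq_one_apply_eq_norm {𝕜 X : Type*} [RCLike 𝕜] [NormedAddCommGroup X]
    [NormedSpace 𝕜 X] (hrefl : Function.Surjective (NormedSpace.inclusionInDoubleDual 𝕜 X))
    {f : StrongDual 𝕜 X} (hf : f ≠ 0) : ∃ x : X, ‖x‖ = 1 ∧ f x = ‖f‖ := by
  obtain ⟨Φ, hΦ_norm, hΦf⟩ := exists_dual_vector 𝕜 f (norm_ne_zero_iff.2 hf)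
  obtain ⟨x, rfl⟩ := hrefl Φ
  have hx : ‖x‖ = 1 :=
    ((NormedSpace.inclusionInDoubleDualLi 𝕜 (E := X)).norm_map x).symm.trans hΦ_norm
  exact ⟨x, hx, by simpa using hΦf⟩

variable {X : Type*} [NormedAddCommGroup X] [NormedSpace ℝ X]

theorem strictConvexSpace_strongDual
    (hsmooth : ∀ x : X, ‖x‖ = 1 → ∃! φ : StrongDual ℝ X, ‖φ‖ = 1 ∧ φ x = 1)
    (hrefl : Function.Surjective (NormedSpace.inclusionInDoubleDual ℝ X)) :
    StrictConvexSpace ℝ (StrongDual ℝ X) := by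
  refine StrictConvexSpace.of_norm_add_ne_two fun φ ψ hφ hψ hne hnorm ↦ hne ?_
  have hsum_ne : φ + ψ ≠ 0 := norm_ne_zero_iff.1 (by simp [hnorm])
  obtain ⟨x, hx, hsum⟩ := exists_norm_eq_one_apply_eq_norm hrefl hsum_ne
  have apply_le_one {χ : StrongDual ℝ X} (hχ : ‖χ‖ = 1) : χ x ≤ 1 := by
    simpa [hχ, hx] using (le_abs_self _).trans (χ.le_opNorm x)
  have hsum_two : φ x + ψ x = 2 := by simpa [hnorm] using hsum
  have hφx := apply_le_one hφ
  have hψx := apply_le_one hψ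
  exact (hsmooth x hx).unique ⟨hφ, by linarith⟩ ⟨hψ, by linarith⟩

end Reflexive

section DualCone

variable {X : Type*} [NormedAddCommGroup X] [NormedSpace ℝ X]

/-- The cone of the continuous linear functionals that are nonnegative on `C`. -/
def dualCone (C : Set X) : PointedCone ℝ (StrongDual ℝ X) :=
  PointedCone.dual (topDualPairing ℝ X).flip C

theorem isClosed_toStrongDual_preimage_coneUpperBounds (C : Set X) (f g : StrongDual ℝ X) :
    IsClosed (WeakDual.toStrongDual ⁻¹' coneUpperBounds (dualCone C) f g) := by
  have isClosed_above (u : StrongDual ℝ X) :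
      IsClosed {w : WeakDual ℝ X | ∀ x ∈ C, 0 ≤ w x - u x} := by
    simp only [ofPred_forall]
    exact isClosed_biInter fun x _ ↦
      isClosed_le continuous_const ((WeakDual.eval_continuous x).sub continuous_const)
  exact (isClosed_above f).inter (isClosed_above g)

open scoped Pointwise in
theorem salient_dualCone {C : Set X} (hC : Dense (C - C)) :
    (dualCone C : ConvexCone ℝ (StrongDual ℝ X)).Salient := by
  refine fun f hf hf₀ hnf ↦ hf₀ ?_
  have hfC (x : X) (hx : x ∈ C) : f x = 0 :=
    le_antisymm (neg_nonneg.1 (hnf hx)) (hf hx)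
  refine DFunLike.coe_injective (Continuous.ext_on hC f.continuous continuous_zero ?_)
  rintro _ ⟨a, ha, b, hb, rfl⟩
  simp [hfC a ha, hfC b hb]

/-- A form of the Mazur–Orlicz theorem. -/
theorem exists_strongDual_forall_le {M : ℝ} (hM : 0 ≤ M) {D : PointedCone ℝ (X × ℝ)}
    (hD : ∀ w ∈ D, w.2 ≤ M * ‖w.1‖) : ∃ p : StrongDual ℝ X, ∀ w ∈ D, w.2 ≤ p w.1 := by
  let A : Set (X × ℝ) := {w | M * ‖w.1‖ < w.2}
  have hA_convex : Convex ℝ A := by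
    simpa using! ((convexOn_univ_norm (E := X)).smul hM).convex_strict_epigraph
  have hA_open : IsOpen A := isOpen_lt (by fun_prop) (by fun_prop)
  have hAD : Disjoint A D := disjoint_left.2 fun w hwA hwD ↦ (hD w hwD).not_gt hwA
  obtain ⟨Φ, u, hΦA, hΦD⟩ := geometric_hahn_banach_open hA_convex hA_open D.convex hAD
  have hΦ_split (x : X) (t : ℝ) : Φ (x, t) = Φ (x, 0) + t * Φ (0, 1) := by
    rw [← smul_eq_mul, ← map_smul, ← map_add]
    simp
  have hΦ_lt_u {ε : ℝ} (hε : 0 < ε) : ε * Φ (0, 1) < u := by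
    have hA : ((0, ε) : X × ℝ) ∈ A := by simpa [A] using hε
    simpa only [hΦ_split 0 ε, Prod.mk_zero_zero, map_zero, zero_add] using hΦA _ hA
  have hu_nonpos : u ≤ 0 := by simpa using hΦD 0 D.zero_mem
  have hΦ_neg : Φ (0, 1) < 0 := by linarith [hΦ_lt_u one_pos]
  have hu_nonneg : 0 ≤ u := by
    by_contra! hu
    simpa [hΦ_neg.ne] using hΦ_lt_u (div_pos_of_neg_of_neg hu hΦ_neg)
  refine ⟨(-Φ (0, 1))⁻¹ • Φ.comp (.inl ℝ X ℝ), fun ⟨x, t⟩ hxt ↦ ?_⟩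
  have hΦ_nonneg : 0 ≤ Φ (x, 0) + t * Φ (0, 1) := hΦ_split x t ▸ hu_nonneg.trans (hΦD _ hxt)
  change t ≤ (-Φ (0, 1))⁻¹ * Φ (x, 0)
  rw [le_inv_mul_iff₀ (neg_pos.2 hΦ_neg)]
  linarith

theorem exists_mem_dualCone_sub_mem {α : ℝ} (hα : 0 ≤ α) {C : PointedCone ℝ X}
    (hC : IsNormalCone α C) (f : StrongDual ℝ X) :
    ∃ p ∈ dualCone (C : Set X), p - f ∈ dualCone (C : Set X) := by
  -- Domination on the image of `L` reads `f y ≤ p (y + z)` for `y, z ∈ C`; take `y = 0` or `z = 0`.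
  let L : X × X →ₗ[ℝ] X × ℝ :=
    (LinearMap.fst ℝ X X + LinearMap.snd ℝ X X).prod (f.toLinearMap ∘ₗ LinearMap.fst ℝ X X)
  have hL (w) (hw : w ∈ PointedCone.map L (C.prod C)) : w.2 ≤ ‖f‖ * α * ‖w.1‖ := by
    obtain ⟨⟨y, z⟩, ⟨hy, hz⟩, rfl⟩ := hw
    calc f y ≤ ‖f‖ * ‖y‖ := (le_abs_self _).trans (f.le_opNorm y)
      _ ≤ ‖f‖ * (α * ‖y + z‖) := by gcongr; exact hC y (y + z) hy (by simpa using hz)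
      _ = ‖f‖ * α * ‖y + z‖ := by ring
  obtain ⟨p, hp⟩ := exists_strongDual_forall_le (by positivity) hL
  refine ⟨p, fun x hx ↦ ?_, fun x hx ↦ ?_⟩
  · simpa [L] using hp _ ⟨(0, x), ⟨C.zero_mem, hx⟩, rfl⟩
  · simpa [L] using hp _ ⟨(x, 0), ⟨hx, C.zero_mem⟩, rfl⟩

theorem nonempty_coneUpperBounds_dualCone {α : ℝ} (hα : 0 ≤ α) {C : PointedCone ℝ X}
    (hC : IsNormalCone α C) (f g : StrongDual ℝ X) :
    (coneUpperBounds (dualCone (C : Set X)) f g).Nonempty := by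
  obtain ⟨p, hp, hpfg⟩ := exists_mem_dualCone_sub_mem hα hC (f - g)
  exact ⟨g + p, by rwa [show g + p - f = p - (f - g) by abel], by simpa using hp⟩

theorem IsApproxConormalCone.isNormalCone_dualCone {α : ℝ} (hα : 0 ≤ α) {C : PointedCone ℝ X}
    (hC : IsApproxConormalCone α C) : IsNormalCone α (dualCone (C : Set X)) := by
  intro u v hu huv
  have apply_le (x : X) : u x ≤ ‖v‖ * (α * ‖x‖) := by
    refine le_mul_of_forall_lt₀ fun b hb c hc ↦ ?_
    obtain ⟨a, ha, hxa, hac⟩ := hC x (c - α * ‖x‖) (sub_pos.2 hc)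
    calc u x ≤ u a := sub_nonneg.1 (by simpa using hu hxa)
      _ ≤ v a := sub_nonneg.1 (huv ha)
      _ ≤ ‖v‖ * ‖a‖ := (le_abs_self _).trans (v.le_opNorm a)
      _ ≤ b * c := mul_le_mul hb.le (by linarith) (norm_nonneg a) ((norm_nonneg v).trans hb.le)
  refine u.opNorm_le_bound (by positivity) fun x ↦ ?_
  rw [mul_comm α, mul_assoc]
  exact abs_le'.2 ⟨apply_le x, by simpa using apply_le (-x)⟩

end DualCone

open scoped Pointwise in
theorem stmt_16_general {X : Type*} [NormedAddCommGroup X] [NormedSpace ℝ X]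
    [StrictConvexSpace ℝ (StrongDual ℝ X)] {α : ℝ} (hα : 0 ≤ α) {C : PointedCone ℝ X}
    (hnormal : IsNormalCone α C) (hdense : Dense ((C : Set X) - (C : Set X))) :
    (∀ f g, ∃! h, IsQuasiSup (coneUpperBounds (dualCone (C : Set X)) f g) f g h) ∧
      (IsApproxConormalCone 1 C → ∀ f g h,
        IsQuasiSup (coneUpperBounds (dualCone (C : Set X)) f g) f g h ↔
          IsQuasiSup (minimalConeUpperBounds (dualCone (C : Set X)) f g) f g h) := by
  have hex (f g) : ∃! h, IsQuasiSup (coneUpperBounds (dualCone (C : Set X)) f g) f g h := by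
    obtain ⟨h, hh⟩ := exists_isQuasiSup_of_isClosed
      (nonempty_coneUpperBounds_dualCone hα hnormal f g)
      (isClosed_toStrongDual_preimage_coneUpperBounds C f g) f g
    exact ⟨h, hh, fun k hk ↦ hk.eq_of_salient (salient_dualCone hdense) hh⟩
  exact ⟨hex, fun hconormal f g h ↦ isQuasiSup_coneUpperBounds_iff_minimal
    (hconormal.isNormalCone_dualCone zero_le_one) (hex f g)⟩

/-- If `X` is an `α`-normal, smooth, reflexive pre-ordered Banach space with
a closed cone `C` such that `C - C` is dense in `X`, then the dual `X'` (with the dual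
cone) is an `υ`-quasi-lattice; if moreover `X` is approximately `1`-conormal, then `X'` is
a `μ`-quasi-lattice whose `υ`- and `μ`-quasi-lattice structures coincide. -/
theorem stmt_16
    {X : Type*} [NormedAddCommGroup X] [NormedSpace ℝ X] [CompleteSpace X]
    (α : ℝ) (hα : 0 < α)
    (C : Set X) (hC_closed : IsClosed C)
    (hC_add : ∀ a ∈ C, ∀ b ∈ C, a + b ∈ C)
    (hC_smul : ∀ r : ℝ, 0 ≤ r → ∀ a ∈ C, r • a ∈ C)
    (hnormal : ∀ x y : X, x ∈ C → y - x ∈ C → ‖x‖ ≤ α * ‖y‖)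
    (hsmooth : ∀ x : X, ‖x‖ = 1 → ∃! φ : X →L[ℝ] ℝ, ‖φ‖ = 1 ∧ φ x = 1)
    (hrefl : Function.Surjective (NormedSpace.inclusionInDoubleDual ℝ X))
    (hdense : Dense {z : X | ∃ a ∈ C, ∃ b ∈ C, z = a - b}) :
    -- the dual cone
    (∀ f g : X →L[ℝ] ℝ, ∃! h : X →L[ℝ] ℝ,
      ((∀ x ∈ C, 0 ≤ (h - f) x) ∧ (∀ x ∈ C, 0 ≤ (h - g) x)) ∧
      ∀ k : X →L[ℝ] ℝ, ((∀ x ∈ C, 0 ≤ (k - f) x) ∧ (∀ x ∈ C, 0 ≤ (k - g) x)) →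
        ‖h - f‖ + ‖h - g‖ ≤ ‖k - f‖ + ‖k - g‖)
    ∧ ((∀ x : X, ∀ ε : ℝ, 0 < ε → ∃ a, a ∈ C ∧ a - x ∈ C ∧ ‖a‖ < ‖x‖ + ε) →
      ∀ f g : X →L[ℝ] ℝ,
        ∀ h : X →L[ℝ] ℝ,
          -- if h is the υ-quasi-supremum of {f,g} ...
          (((∀ x ∈ C, 0 ≤ (h - f) x) ∧ (∀ x ∈ C, 0 ≤ (h - g) x)) ∧
            ∀ k : X →L[ℝ] ℝ,
              ((∀ x ∈ C, 0 ≤ (k - f) x) ∧ (∀ x ∈ C, 0 ≤ (k - g) x)) →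
                ‖h - f‖ + ‖h - g‖ ≤ ‖k - f‖ + ‖k - g‖) →
          -- ... then h is a minimal upper bound of {f,g} ...
          ((∀ k : X →L[ℝ] ℝ,
              ((∀ x ∈ C, 0 ≤ (k - f) x) ∧ (∀ x ∈ C, 0 ≤ (k - g) x)) →
                (∀ x ∈ C, 0 ≤ (h - k) x) → k = h) ∧
           -- ... minimizing σ_{f,g} over all minimal upper bounds ...
           (∀ k : X →L[ℝ] ℝ,
              (((∀ x ∈ C, 0 ≤ (k - f) x) ∧ (∀ x ∈ C, 0 ≤ (k - g) x)) ∧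
                ∀ l : X →L[ℝ] ℝ,
                  ((∀ x ∈ C, 0 ≤ (l - f) x) ∧ (∀ x ∈ C, 0 ≤ (l - g) x)) →
                    (∀ x ∈ C, 0 ≤ (k - l) x) → l = k) →
              ‖h - f‖ + ‖h - g‖ ≤ ‖k - f‖ + ‖k - g‖) ∧
           -- ... and it is the unique such minimizer.
           (∀ h' : X →L[ℝ] ℝ,
              ((((∀ x ∈ C, 0 ≤ (h' - f) x) ∧ (∀ x ∈ C, 0 ≤ (h' - g) x)) ∧
                ∀ l : X →L[ℝ] ℝ,
                  ((∀ x ∈ C, 0 ≤ (l - f) x) ∧ (∀ x ∈ C, 0 ≤ (l - g) x)) →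
                    (∀ x ∈ C, 0 ≤ (h' - l) x) → l = h') ∧
               ∀ k : X →L[ℝ] ℝ,
                 (((∀ x ∈ C, 0 ≤ (k - f) x) ∧ (∀ x ∈ C, 0 ≤ (k - g) x)) ∧
                   ∀ l : X →L[ℝ] ℝ,
                     ((∀ x ∈ C, 0 ≤ (l - f) x) ∧ (∀ x ∈ C, 0 ≤ (l - g) x)) →
                       (∀ x ∈ C, 0 ≤ (k - l) x) → l = k) →
                 ‖h' - f‖ + ‖h' - g‖ ≤ ‖k - f‖ + ‖k - g‖) →
              h' = h))) := by
  have h0 : C.Nonempty := by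
    obtain ⟨_, a, ha, -⟩ := hdense.nonempty
    exact ⟨a, ha⟩
  let K : PointedCone ℝ X := .ofConeComb C h0 fun x hx y hy a ha b hb ↦
    hC_add _ (hC_smul a ha x hx) _ (hC_smul b hb y hy)
  have := strictConvexSpace_strongDual hsmooth hrefl
  obtain ⟨hυ, hμ⟩ := stmt_16_general (C := K) hα.le hnormal
    (hdense.mono (by rintro _ ⟨a, ha, b, hb, rfl⟩; exact sub_mem_sub ha hb))
  refine ⟨hυ, fun hconormal f g h hh ↦ ?_⟩
  have hiff := hμ (by simpa only [IsApproxConormalCone, one_mul] using! hconormal) f g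
  exact ⟨((hiff h).1 hh).1.2, ((hiff h).1 hh).2,
    fun h' hh' ↦ (hυ f g).unique ((hiff h').2 hh') hh⟩
end

section
/- Let H be a real Hilbert space ordered by the Lorentz cone L_v for a norm-one element v ∈ H. Then for every x ∈ H there exists a unique element z ∈ H with x ≤ z and −x ≤ z that minimizes σ(w) := ‖w − x‖ + ‖w + x‖ over all upper bounds w of {x, −x}, and this quasi-absolute value z = ⌈x⌉ satisfies ‖⌈x⌉‖ = ‖x‖. Consequently H is 1-absolutely conormal: for every x ∈ H there exists a ∈ L_v with ±x ≤ a and ‖a‖ ≤ ‖x‖. -/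
/-!
Write `x = α v + p` with `p ⊥ v`, and put `m = max |α| ‖p‖` and `e = p / m`, so that
`x = α v + m e`. The quasi-absolute value is obtained by exchanging the two coefficients:
`z = m v + α e`. Since `|α| = m` or `‖e‖ = 1`, it has the same norm as `x`. Moreover
`z - x = (m - α) (v - e)` and `z + x = (m + α) (v + e)`, where `v ± e` lie in the cone and have a
common norm `c`, so `σ(z) = 2 m c`.

Optimality follows by testing an upper bound `w` against the same vectors `v ∓ e`:
`⟪w - x, v - e⟫ + ⟪w + x, v + e⟫ = 2 (⟪v, w⟫ - m) + 2 m c²`. Every upper bound satisfies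
`⟪v, w⟫ ≥ m`, and the left side is at most `c σ(w)` by Cauchy–Schwarz, so `σ(w) ≥ 2 m c`. In case of
equality `⟪v, w⟫ = m` and `w - x` is a nonnegative multiple of `v - e`, which forces `w = z`.
-/

open scoped RealInnerProductSpace

/-- The Lorentz cone in a real Hilbert space determined by a norm-one vector `v`:
`{x | ⟨v, x⟩ ≥ ‖Px‖}`, where `Px = x - ⟨v, x⟩ v` is the orthogonal projection of `x`
onto the orthogonal complement of `v` (for `‖v‖ = 1`). -/
def lorentzCone {H : Type*} [NormedAddCommGroup H] [InnerProductSpace ℝ H] (v : H) :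
    Set H :=
  {x | ‖x - ⟪v, x⟫ • v‖ ≤ ⟪v, x⟫}

section LorentzCone

variable {H : Type*} [NormedAddCommGroup H] [InnerProductSpace ℝ H] {v : H}

lemma eq_inner_smul_of_inner_eq_norm_mul_norm {u y : H} (hu : ⟪v, u⟫ = 1)
    (h : ⟪y, u⟫ = ‖y‖ * ‖u‖) : y = ⟪v, y⟫ • u := by
  have hu₀ : ‖u‖ ≠ 0 := by
    intro hu₀
    rw [norm_eq_zero.1 hu₀, inner_zero_right] at hu
    exact zero_ne_one hu
  have hparallel : ‖u‖ • y = ‖y‖ • u := inner_eq_norm_mul_iff_real.1 h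
  have hfactor : ‖u‖ * ⟪v, y⟫ = ‖y‖ := by
    rw [← real_inner_smul_right, hparallel, real_inner_smul_right, hu, mul_one]
  refine smul_right_injective H hu₀ ?_
  change ‖u‖ • y = ‖u‖ • ⟪v, y⟫ • u
  rw [smul_smul, hfactor, hparallel]

lemma norm_smul_add_smul_sq (hv : ‖v‖ = 1) {y : H} (hvy : ⟪v, y⟫ = 0) (a b : ℝ) :
    ‖a • v + b • y‖ ^ 2 = a ^ 2 + b ^ 2 * ‖y‖ ^ 2 := by
  rw [norm_add_sq_real, real_inner_smul_left, real_inner_smul_right, hvy, norm_smul, norm_smul, hv,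
    mul_pow, mul_pow, Real.norm_eq_abs, Real.norm_eq_abs, sq_abs, sq_abs]
  ring

lemma smul_mem_lorentzCone {c : ℝ} (hc : 0 ≤ c) {x : H} (hx : x ∈ lorentzCone v) :
    c • x ∈ lorentzCone v := by
  change ‖c • x - ⟪v, c • x⟫ • v‖ ≤ ⟪v, c • x⟫
  rw [real_inner_smul_right, mul_smul, ← smul_sub, norm_smul, Real.norm_of_nonneg hc]
  exact mul_le_mul_of_nonneg_left hx hc

lemma add_mem_lorentzCone {x y : H} (hx : x ∈ lorentzCone v) (hy : y ∈ lorentzCone v) :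
    x + y ∈ lorentzCone v := by
  change ‖x + y - ⟪v, x + y⟫ • v‖ ≤ ⟪v, x + y⟫
  rw [inner_add_right, add_smul, add_sub_add_comm]
  exact (norm_add_le _ _).trans (add_le_add hx hy)

lemma inner_nonneg_of_mem_lorentzCone {x : H} (hx : x ∈ lorentzCone v) : 0 ≤ ⟪v, x⟫ :=
  (norm_nonneg _).trans hx

lemma add_mem_lorentzCone_of_norm_le_one (hv : ‖v‖ = 1) {y : H} (hvy : ⟪v, y⟫ = 0)
    (hy : ‖y‖ ≤ 1) : v + y ∈ lorentzCone v := by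
  have hheight : ⟪v, v + y⟫ = 1 := by
    rw [inner_add_right, real_inner_self_eq_norm_sq, hv, hvy, one_pow, add_zero]
  change ‖v + y - ⟪v, v + y⟫ • v‖ ≤ ⟪v, v + y⟫
  rwa [hheight, one_smul, add_sub_cancel_left]

/-- The set of upper bounds of `{x, -x}` for the order given by `lorentzCone v`. -/
def absUpperBounds (v x : H) : Set H :=
  {w | w - x ∈ lorentzCone v ∧ w + x ∈ lorentzCone v}

lemma mem_lorentzCone_of_mem_absUpperBounds {x w : H} (hw : w ∈ absUpperBounds v x) :
    w ∈ lorentzCone v := by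
  have hmid : w = (2⁻¹ : ℝ) • ((w - x) + (w + x)) := by module
  rw [hmid]
  exact smul_mem_lorentzCone (by norm_num) (add_mem_lorentzCone hw.1 hw.2)

/-- The larger of the norms of the components of `x` along `v` and orthogonal to `v`. It is the
coefficient of `v` in the quasi-absolute value of `x`. -/
noncomputable def lorentzHeight (v x : H) : ℝ :=
  max |⟪v, x⟫| ‖x - ⟪v, x⟫ • v‖

/-- The component of `x` orthogonal to `v`, rescaled by `lorentzHeight v x` so as to lie in the unit
ball. It is `0` when the height vanishes, that is, when `x = 0`. -/
noncomputable def lorentzDirection (v x : H) : H :=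
  (lorentzHeight v x)⁻¹ • (x - ⟪v, x⟫ • v)

/-- The quasi-absolute value `⌈x⌉` in closed form: the coefficients of `v` and of
`lorentzDirection v x` in `x` are exchanged. -/
noncomputable def quasiAbs (v x : H) : H :=
  lorentzHeight v x • v + ⟪v, x⟫ • lorentzDirection v x

/-- The defining property of a quasi-absolute value `z` of `x`: among the upper bounds `w` of
`{x, -x}` it minimizes `‖w - x‖ + ‖w + x‖`. -/
def IsQuasiAbs (v x z : H) : Prop :=
  z ∈ absUpperBounds v x ∧
    ∀ w ∈ absUpperBounds v x, ‖z - x‖ + ‖z + x‖ ≤ ‖w - x‖ + ‖w + x‖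

lemma abs_inner_le_lorentzHeight (v x : H) : |⟪v, x⟫| ≤ lorentzHeight v x :=
  le_max_left _ _

lemma lorentzHeight_nonneg (v x : H) : 0 ≤ lorentzHeight v x :=
  (abs_nonneg _).trans (abs_inner_le_lorentzHeight v x)

lemma lorentzHeight_smul_lorentzDirection (v x : H) :
    lorentzHeight v x • lorentzDirection v x = x - ⟪v, x⟫ • v := by
  rcases eq_or_ne (lorentzHeight v x) 0 with hm | hm
  · have horth : ‖x - ⟪v, x⟫ • v‖ ≤ 0 := hm ▸ le_max_right _ _
    rw [hm, zero_smul, norm_le_zero_iff.1 horth]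
  · exact smul_inv_smul₀ hm _

lemma lorentzHeight_mul_norm_lorentzDirection (v x : H) :
    lorentzHeight v x * ‖lorentzDirection v x‖ = ‖x - ⟪v, x⟫ • v‖ := by
  rw [← lorentzHeight_smul_lorentzDirection, norm_smul,
    Real.norm_of_nonneg (lorentzHeight_nonneg v x)]

lemma inner_smul_add_lorentzHeight_smul_lorentzDirection (v x : H) :
    ⟪v, x⟫ • v + lorentzHeight v x • lorentzDirection v x = x := by
  rw [lorentzHeight_smul_lorentzDirection, add_sub_cancel]

lemma norm_lorentzDirection_le_one (v x : H) : ‖lorentzDirection v x‖ ≤ 1 := by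
  rw [lorentzDirection, norm_smul, norm_inv, Real.norm_of_nonneg (lorentzHeight_nonneg v x),
    inv_mul_eq_div]
  exact div_le_one_of_le₀ (le_max_right _ _) (lorentzHeight_nonneg v x)

lemma abs_inner_eq_lorentzHeight_or_norm_lorentzDirection_eq_one (v x : H) :
    |⟪v, x⟫| = lorentzHeight v x ∨ ‖lorentzDirection v x‖ = 1 := by
  rcases (abs_inner_le_lorentzHeight v x).eq_or_lt with h | h
  · exact .inl h
  · have hpos : 0 < lorentzHeight v x := (abs_nonneg _).trans_lt h
    have horth : lorentzHeight v x = ‖x - ⟪v, x⟫ • v‖ :=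
      (max_choice _ _).resolve_left h.ne'
    refine .inr (mul_left_cancel₀ hpos.ne' ?_)
    rw [lorentzHeight_mul_norm_lorentzDirection, mul_one, horth]

lemma inner_lorentzDirection_eq_zero (hv : ‖v‖ = 1) (x : H) : ⟪v, lorentzDirection v x⟫ = 0 := by
  rw [lorentzDirection, real_inner_smul_right, inner_sub_right, real_inner_smul_right,
    real_inner_self_eq_norm_sq, hv]
  ring

lemma norm_quasiAbs (hv : ‖v‖ = 1) (x : H) : ‖quasiAbs v x‖ = ‖x‖ := by
  have hdir := inner_lorentzDirection_eq_zero hv x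
  have hx : ‖x‖ ^ 2 = ⟪v, x⟫ ^ 2 + lorentzHeight v x ^ 2 * ‖lorentzDirection v x‖ ^ 2 := by
    rw [← norm_smul_add_smul_sq hv hdir, inner_smul_add_lorentzHeight_smul_lorentzDirection]
  rw [← sq_eq_sq₀ (norm_nonneg _) (norm_nonneg _), hx, quasiAbs, norm_smul_add_smul_sq hv hdir]
  rcases abs_inner_eq_lorentzHeight_or_norm_lorentzDirection_eq_one v x with h | h
  · rw [← h, sq_abs]
  · rw [h]
    ring

lemma quasiAbs_sub_self (v x : H) :
    quasiAbs v x - x = (lorentzHeight v x - ⟪v, x⟫) • (v - lorentzDirection v x) := by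
  rw [quasiAbs, sub_smul, smul_sub, smul_sub, lorentzHeight_smul_lorentzDirection]
  module

lemma quasiAbs_add_self (v x : H) :
    quasiAbs v x + x = (lorentzHeight v x + ⟪v, x⟫) • (v + lorentzDirection v x) := by
  rw [quasiAbs, add_smul, smul_add, smul_add, lorentzHeight_smul_lorentzDirection]
  module

lemma quasiAbs_mem_absUpperBounds (hv : ‖v‖ = 1) (x : H) :
    quasiAbs v x ∈ absUpperBounds v x := by
  have hinner := abs_le.1 (abs_inner_le_lorentzHeight v x)
  have hdir := inner_lorentzDirection_eq_zero hv x
  have hnorm := norm_lorentzDirection_le_one v x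
  refine ⟨?_, ?_⟩
  · rw [quasiAbs_sub_self, sub_eq_add_neg v]
    exact smul_mem_lorentzCone (sub_nonneg.2 hinner.2) <| add_mem_lorentzCone_of_norm_le_one hv
      (by rw [inner_neg_right, hdir, neg_zero]) (by rwa [norm_neg])
  · rw [quasiAbs_add_self]
    exact smul_mem_lorentzCone (by linarith) (add_mem_lorentzCone_of_norm_le_one hv hdir hnorm)

lemma norm_sub_lorentzDirection (hv : ‖v‖ = 1) (x : H) :
    ‖v - lorentzDirection v x‖ = ‖v + lorentzDirection v x‖ :=
  norm_sub_eq_norm_add (𝕜 := ℝ) <|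
    (real_inner_comm _ _).trans (inner_lorentzDirection_eq_zero hv x)

lemma norm_add_lorentzDirection_sq (hv : ‖v‖ = 1) (x : H) :
    ‖v + lorentzDirection v x‖ ^ 2 = 1 + ‖lorentzDirection v x‖ ^ 2 := by
  simpa only [one_smul, one_pow, one_mul] using
    norm_smul_add_smul_sq hv (inner_lorentzDirection_eq_zero hv x) 1 1

lemma norm_add_lorentzDirection_pos (hv : ‖v‖ = 1) (x : H) :
    0 < ‖v + lorentzDirection v x‖ := by
  have hsq : 0 < ‖v + lorentzDirection v x‖ ^ 2 := by
    rw [norm_add_lorentzDirection_sq hv]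
    positivity
  exact (norm_nonneg _).lt_of_ne' (sq_pos_iff.1 hsq)

lemma norm_quasiAbs_sub_add_norm_quasiAbs_add (hv : ‖v‖ = 1) (x : H) :
    ‖quasiAbs v x - x‖ + ‖quasiAbs v x + x‖ =
      2 * lorentzHeight v x * ‖v + lorentzDirection v x‖ := by
  have hinner := abs_le.1 (abs_inner_le_lorentzHeight v x)
  rw [quasiAbs_sub_self, quasiAbs_add_self, norm_smul, norm_smul, norm_sub_lorentzDirection hv,
    Real.norm_of_nonneg (by linarith), Real.norm_of_nonneg (by linarith)]
  ring

lemma lorentzHeight_le_inner_of_mem_absUpperBounds {x w : H} (hw : w ∈ absUpperBounds v x) :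
    lorentzHeight v x ≤ ⟪v, w⟫ := by
  obtain ⟨hsub, hadd⟩ := hw
  refine max_le (abs_le.2 ?_) ?_
  · have h₁ := inner_nonneg_of_mem_lorentzCone hsub
    have h₂ := inner_nonneg_of_mem_lorentzCone hadd
    rw [inner_sub_right] at h₁
    rw [inner_add_right] at h₂
    constructor <;> linarith
  · have hdiff : (2 : ℝ) • (x - ⟪v, x⟫ • v) =
        (w + x - ⟪v, w + x⟫ • v) - (w - x - ⟪v, w - x⟫ • v) := by
      rw [inner_add_right, inner_sub_right]
      module
    have hnorm : 2 * ‖x - ⟪v, x⟫ • v‖ ≤ 2 * ⟪v, w⟫ := calc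
      2 * ‖x - ⟪v, x⟫ • v‖ = ‖(2 : ℝ) • (x - ⟪v, x⟫ • v)‖ := by rw [norm_smul, Real.norm_ofNat]
      _ ≤ ‖w + x - ⟪v, w + x⟫ • v‖ + ‖w - x - ⟪v, w - x⟫ • v‖ := by
        rw [hdiff]
        exact norm_sub_le _ _
      _ ≤ ⟪v, w + x⟫ + ⟪v, w - x⟫ := add_le_add hadd hsub
      _ = 2 * ⟪v, w⟫ := by
        rw [inner_add_right, inner_sub_right]
        ring
    linarith

lemma inner_lorentzDirection_eq_mul (hv : ‖v‖ = 1) (x : H) :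
    ⟪x, lorentzDirection v x⟫ = lorentzHeight v x * ‖lorentzDirection v x‖ ^ 2 := by
  rw [← real_inner_self_eq_norm_sq, ← real_inner_smul_left, lorentzHeight_smul_lorentzDirection,
    inner_sub_left, real_inner_smul_left, inner_lorentzDirection_eq_zero hv, mul_zero, sub_zero]

lemma inner_sub_add_inner_add_lorentzDirection (hv : ‖v‖ = 1) (x w : H) :
    ⟪w - x, v - lorentzDirection v x⟫ + ⟪w + x, v + lorentzDirection v x⟫ =
      2 * (⟪v, w⟫ - lorentzHeight v x) +
        2 * lorentzHeight v x * ‖v + lorentzDirection v x‖ ^ 2 := by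
  rw [norm_add_lorentzDirection_sq hv, real_inner_comm w v]
  simp only [inner_add_left, inner_add_right, inner_sub_left, inner_sub_right,
    inner_lorentzDirection_eq_mul hv]
  ring

lemma two_mul_lorentzHeight_mul_norm_le (hv : ‖v‖ = 1) {x w : H}
    (hw : w ∈ absUpperBounds v x) :
    2 * lorentzHeight v x * ‖v + lorentzDirection v x‖ ≤ ‖w - x‖ + ‖w + x‖ := by
  have hheight := lorentzHeight_le_inner_of_mem_absUpperBounds hw
  have hdual := inner_sub_add_inner_add_lorentzDirection hv x w
  have hsub := real_inner_le_norm (w - x) (v - lorentzDirection v x)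
  have hadd := real_inner_le_norm (w + x) (v + lorentzDirection v x)
  rw [norm_sub_lorentzDirection hv] at hsub
  refine le_of_mul_le_mul_right ?_ (norm_add_lorentzDirection_pos hv x)
  linarith

lemma eq_quasiAbs_of_norm_sub_add_norm_add_le (hv : ‖v‖ = 1) {x w : H}
    (hw : w ∈ absUpperBounds v x)
    (hle : ‖w - x‖ + ‖w + x‖ ≤ 2 * lorentzHeight v x * ‖v + lorentzDirection v x‖) :
    w = quasiAbs v x := by
  have hheight := lorentzHeight_le_inner_of_mem_absUpperBounds hw
  have hdual := inner_sub_add_inner_add_lorentzDirection hv x w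
  have hsub := real_inner_le_norm (w - x) (v - lorentzDirection v x)
  have hadd := real_inner_le_norm (w + x) (v + lorentzDirection v x)
  have hle' := mul_le_mul_of_nonneg_right hle (norm_nonneg (v + lorentzDirection v x))
  have hnorm := norm_sub_lorentzDirection hv x
  have hinner : ⟪v, w⟫ = lorentzHeight v x := by
    rw [hnorm] at hsub
    linarith
  have hcauchy : ⟪w - x, v - lorentzDirection v x⟫ = ‖w - x‖ * ‖v - lorentzDirection v x‖ := by
    rw [hnorm] at hsub ⊢
    linarith
  have hone : ⟪v, v - lorentzDirection v x⟫ = 1 := by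
    rw [inner_sub_right, inner_lorentzDirection_eq_zero hv, real_inner_self_eq_norm_sq, hv, one_pow,
      sub_zero]
  have hparallel := eq_inner_smul_of_inner_eq_norm_mul_norm hone hcauchy
  rw [inner_sub_right, hinner, ← quasiAbs_sub_self] at hparallel
  exact sub_left_injective hparallel

theorem isQuasiAbs_iff_eq_quasiAbs (hv : ‖v‖ = 1) {x z : H} :
    IsQuasiAbs v x z ↔ z = quasiAbs v x := by
  have hmem := quasiAbs_mem_absUpperBounds hv x
  have hsum := norm_quasiAbs_sub_add_norm_quasiAbs_add hv x
  constructor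
  · rintro ⟨hz, hmin⟩
    exact eq_quasiAbs_of_norm_sub_add_norm_add_le hv hz (hsum ▸ hmin _ hmem)
  · rintro rfl
    exact ⟨hmem, fun w hw => hsum ▸ two_mul_lorentzHeight_mul_norm_le hv hw⟩

end LorentzCone

theorem stmt_19_general
    {H : Type*} [NormedAddCommGroup H] [InnerProductSpace ℝ H]
    (v : H) (hv : ‖v‖ = 1) :
    (∀ x : H,
      (∃! z : H, (z - x ∈ lorentzCone v ∧ z + x ∈ lorentzCone v) ∧
        ∀ w : H, (w - x ∈ lorentzCone v ∧ w + x ∈ lorentzCone v) →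
          ‖z - x‖ + ‖z + x‖ ≤ ‖w - x‖ + ‖w + x‖) ∧
      (∀ z : H, ((z - x ∈ lorentzCone v ∧ z + x ∈ lorentzCone v) ∧
          ∀ w : H, (w - x ∈ lorentzCone v ∧ w + x ∈ lorentzCone v) →
            ‖z - x‖ + ‖z + x‖ ≤ ‖w - x‖ + ‖w + x‖) →
        ‖z‖ = ‖x‖))
    ∧ ∀ x : H, ∃ a ∈ lorentzCone v,
        a - x ∈ lorentzCone v ∧ a + x ∈ lorentzCone v ∧ ‖a‖ ≤ ‖x‖ := by
  refine ⟨fun x => ⟨⟨quasiAbs v x, (isQuasiAbs_iff_eq_quasiAbs hv).2 rfl,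
    fun _ => (isQuasiAbs_iff_eq_quasiAbs hv).1⟩, fun z hz => ?_⟩, fun x => ?_⟩
  · rw [(isQuasiAbs_iff_eq_quasiAbs hv).1 hz, norm_quasiAbs hv]
  · have hmem := quasiAbs_mem_absUpperBounds hv x
    exact ⟨quasiAbs v x, mem_lorentzCone_of_mem_absUpperBounds hmem, hmem.1, hmem.2,
      (norm_quasiAbs hv x).le⟩

/-- In a real Hilbert space ordered by a Lorentz cone, every `x` has a unique
quasi-absolute value `⌈x⌉`: the unique upper bound `z` of `{x, -x}` minimizing
`σ(w) = ‖w - x‖ + ‖w + x‖` over upper bounds of `{x, -x}`; it satisfies `‖⌈x⌉‖ = ‖x‖`.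
Consequently `H` is `1`-absolutely conormal. Here `a ≤ b` means `b - a ∈ lorentzCone v`. -/
theorem stmt_19
    {H : Type*} [NormedAddCommGroup H] [InnerProductSpace ℝ H] [CompleteSpace H]
    (v : H) (hv : ‖v‖ = 1) :
    (∀ x : H,
      (∃! z : H, (z - x ∈ lorentzCone v ∧ z + x ∈ lorentzCone v) ∧
        ∀ w : H, (w - x ∈ lorentzCone v ∧ w + x ∈ lorentzCone v) →
          ‖z - x‖ + ‖z + x‖ ≤ ‖w - x‖ + ‖w + x‖) ∧
      (∀ z : H, ((z - x ∈ lorentzCone v ∧ z + x ∈ lorentzCone v) ∧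
          ∀ w : H, (w - x ∈ lorentzCone v ∧ w + x ∈ lorentzCone v) →
            ‖z - x‖ + ‖z + x‖ ≤ ‖w - x‖ + ‖w + x‖) →
        ‖z‖ = ‖x‖))
    ∧ ∀ x : H, ∃ a ∈ lorentzCone v,
        a - x ∈ lorentzCone v ∧ a + x ∈ lorentzCone v ∧ ‖a‖ ≤ ‖x‖ :=
  stmt_19_general v hv
end
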